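/- The functions β_k : [0,1) → ℂ, k ∈ ℕ₀, defined by β_k(x) = e^{2πi φ_p(k) φ_p^+(x)} (pairing a p-adic number with the fractional value φ_p(k), taken modulo 1), form an orthonormal system in L²([0,1]): ∫₀¹ β_k(x) conj(β_l(x)) dx = 1 if k = l and 0 otherwise. -/

import Mathlib

/-- The `r`-th base-`p` digit of `x ∈ [0,1)` (finite expansion for `p`-adic rationals). -/
noncomputable def padDigit (p : ℕ) (x : ℝ) (r : ℕ) : ℕ := ⌊x * (p : ℝ) ^ (r + 1)⌋.toNat % p

/-- The inverse Monna map `φ_p^+ : [0,1) → ℤ_p`, sending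
`x = ∑ x_r p^{-(r+1)}` (finite expansion for `p`-adic rationals) to `∑ x_r p^r`. -/
noncomputable def phiPlus (p : ℕ) [Fact p.Prime] (x : ℝ) : ℤ_[p] :=
  ∑' r : ℕ, (padDigit p x r : ℤ_[p]) * (p : ℤ_[p]) ^ r

/-- The radical inverse function `φ_p : ℕ → [0,1)` in base `p`. -/
noncomputable def radInv (p : ℕ) (k : ℕ) : ℝ :=
  ∑ i ∈ Finset.range (Nat.log p k + 1), (k / p ^ i % p : ℕ) / (p : ℝ) ^ (i + 1)

/-- The `p`-adic character `χ_k(z) = e^{2πi φ_p(k) z}`, where the product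
`φ_p(k)·z` is taken modulo one: since `φ_p(k)` has denominator `p^a` with
`a = log_p k + 1`, only `z` modulo `p^a` (its approximation `z.appr a`) matters. -/
noncomputable def padChar (p : ℕ) [Fact p.Prime] (k : ℕ) (z : ℤ_[p]) : ℂ :=
  Complex.exp (2 * Real.pi * Complex.I *
    (radInv p k * (z.appr (Nat.log p k + 1) : ℝ)))

/-- The `p`-adic function `β_k(x) = χ_k(φ_p^+(x))`. -/
noncomputable def padBeta (p : ℕ) [Fact p.Prime] (k : ℕ) (x : ℝ) : ℂ :=
  padChar p k (phiPlus p x)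

/-- The Monna map `φ_p : ℤ_p → [0,1)`, sending `∑ z_r p^r` to `∑ z_r p^{-(r+1)} (mod 1)`. -/
noncomputable def monna (p : ℕ) [Fact p.Prime] (z : ℤ_[p]) : ℝ :=
  Int.fract (∑' r : ℕ, ((z.appr (r + 1) / p ^ r : ℕ) : ℝ) / (p : ℝ) ^ (r + 1))

/-- The `p`-adic shift `x ⊕_p σ = φ_p(φ_p^+(x) + φ_p^+(σ))`. -/
noncomputable def oplus (p : ℕ) [Fact p.Prime] (x σ : ℝ) : ℝ :=
  monna p (phiPlus p x + phiPlus p σ)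

/-- The inverse `p`-adic shift `x ⊖_p σ = φ_p(φ_p^+(x) - φ_p^+(σ))`. -/
noncomputable def ominus (p : ℕ) [Fact p.Prime] (x σ : ℝ) : ℝ :=
  monna p (phiPlus p x - phiPlus p σ)

/-!
Cut `[0,1)` into `p ^ n` equal intervals, where `n` is at least the number of base-`p` digits of `k`
and of `l`. Let `m'` denote the reversal of the first `n` digits of `m`. On the `m`-th interval
`φ_p^+(x)` is congruent to `m'` modulo `p ^ n`, while `φ_p(k) = k' / p ^ n`; so there
`β_k(x) = ψ(k' m')` for the standard character `ψ` of `ℤ/p^n`. As `m` runs through the intervals,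
`m'` runs through `ℤ/p^n`, and the integral becomes the average of `ψ((k' - l') z)` over
`z ∈ ℤ/p^n`, which vanishes unless `k' = l'`, that is, unless `k = l`.
-/

open Finset MeasureTheory
open scoped ComplexConjugate

section IntegralFloor

lemma eqOn_comp_natFloor_Ioo {α : Type*} (f : ℕ → α) (m : ℕ) :
    Set.EqOn (fun _ : ℝ => f m) (fun x : ℝ => f ⌊x⌋₊) (Set.Ioo (m : ℝ) (m + 1 : ℕ)) := by
  rintro x ⟨hmx, hxm⟩
  have hfloor : ⌊x⌋₊ = m :=
    (Nat.floor_eq_iff (m.cast_nonneg.trans hmx.le)).2 ⟨hmx.le, by exact_mod_cast hxm⟩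
  simp only [hfloor]

variable {E : Type*} [NormedAddCommGroup E] (f : ℕ → E)

lemma intervalIntegrable_comp_natFloor (m : ℕ) :
    IntervalIntegrable (fun x : ℝ => f ⌊x⌋₊) volume m (m + 1 : ℕ) := by
  refine (intervalIntegrable_const (c := f m)).congr_uIoo ?_
  rw [Set.uIoo_of_le (by simp)]
  exact eqOn_comp_natFloor_Ioo f m

variable [NormedSpace ℝ E] [CompleteSpace E]

lemma integral_comp_natFloor (n : ℕ) :
    ∫ x in (0 : ℝ)..n, f ⌊x⌋₊ = ∑ m ∈ range n, f m := by
  rw [← Nat.cast_zero, ← intervalIntegral.sum_integral_adjacent_intervals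
    fun m _ => intervalIntegrable_comp_natFloor f m]
  refine sum_congr rfl fun m _ => ?_
  rw [← intervalIntegral.integral_congr_Ioo_of_le (by simp) (eqOn_comp_natFloor_Ioo f m)]
  simp

lemma setIntegral_Ico_comp_natFloor_mul (n : ℕ) [NeZero n] :
    ∫ x in Set.Ico (0 : ℝ) 1, f ⌊x * n⌋₊ = (n : ℝ)⁻¹ • ∑ m ∈ range n, f m := by
  rw [integral_Ico_eq_integral_Ioc, ← intervalIntegral.integral_of_le zero_le_one,
    intervalIntegral.integral_comp_mul_right (fun x => f ⌊x⌋₊) (NeZero.ne (n : ℝ)),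
    zero_mul, one_mul, integral_comp_natFloor]

end IntegralFloor

section DigitReversal

/-- The reversal of the base-`b` expansion of `m`, read as a string of exactly `n` digits: leading
zeros are included, and digits beyond the `n`-th are discarded. -/
def digitRev (b n m : ℕ) : ℕ := ∑ i ∈ range n, m / b ^ (n - 1 - i) % b * b ^ i

variable {b : ℕ}

lemma digitRev_div_pow (hb : b ≠ 0) (n m : ℕ) :
    (digitRev b n m : ℝ) / b ^ n = ∑ i ∈ range n, (m / b ^ i % b : ℕ) / (b : ℝ) ^ (i + 1) := by
  rw [digitRev, ← sum_range_reflect, Nat.cast_sum, sum_div]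
  refine sum_congr rfl fun i hi => ?_
  obtain ⟨j, rfl⟩ := Nat.exists_eq_add_of_lt (mem_range.1 hi)
  have hrefl : i + j + 1 - 1 - i = j := by omega
  have hrefl' : i + j + 1 - 1 - j = i := by omega
  rw [hrefl, hrefl', Nat.cast_mul, Nat.cast_pow]
  field_simp
  ring

variable [NeZero b]

lemma digitRev_eq_finFunctionFinEquiv (n m : ℕ) :
    digitRev b n m = finFunctionFinEquiv fun i : Fin n => Fin.ofNat b (m / b ^ (i.rev : ℕ)) := by
  rw [digitRev, finFunctionFinEquiv_apply, sum_range]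
  refine sum_congr rfl fun i _ => ?_
  rw [Fin.val_ofNat, Fin.val_rev, Nat.sub_sub, add_comm 1]

lemma digitRev_lt (n m : ℕ) : digitRev b n m < b ^ n := by
  rw [digitRev_eq_finFunctionFinEquiv]
  exact Fin.isLt _

lemma digitRev_injOn (n : ℕ) : Set.InjOn (digitRev b n) (Set.Iio (b ^ n)) := by
  intro m hm k hk h
  have hrev : (fun i : Fin n => Fin.ofNat b (m / b ^ (i.rev : ℕ)))
      = fun i : Fin n => Fin.ofNat b (k / b ^ (i.rev : ℕ)) := by
    apply finFunctionFinEquiv.injective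
    rwa [Fin.ext_iff, ← digitRev_eq_finFunctionFinEquiv, ← digitRev_eq_finFunctionFinEquiv]
  have hdigits : finFunctionFinEquiv.symm ⟨m, hm⟩ = finFunctionFinEquiv.symm ⟨k, hk⟩ := by
    ext i
    simpa using congrArg Fin.val (congrFun hrev i.rev)
  exact congrArg Fin.val (finFunctionFinEquiv.symm.injective hdigits)

lemma natCast_digitRev_inj {n m k : ℕ} (hm : m < b ^ n) (hk : k < b ^ n) :
    (digitRev b n m : ZMod (b ^ n)) = digitRev b n k ↔ m = k := by
  rw [ZMod.natCast_eq_natCast_iff', Nat.mod_eq_of_lt (digitRev_lt n m),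
    Nat.mod_eq_of_lt (digitRev_lt n k)]
  exact (digitRev_injOn n).eq_iff hm hk

lemma sum_range_natCast_digitRev {M : Type*} [AddCommMonoid M] (n : ℕ) (f : ZMod (b ^ n) → M) :
    ∑ m ∈ range (b ^ n), f (digitRev b n m) = ∑ z, f z := by
  have hinj : Function.Injective fun m : Fin (b ^ n) => (digitRev b n m : ZMod (b ^ n)) :=
    fun m k h => Fin.ext ((natCast_digitRev_inj m.isLt k.isLt).1 h)
  have hbij := (Fintype.bijective_iff_injective_and_card _).2
    ⟨hinj, by rw [Fintype.card_fin, ZMod.card]⟩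
  rw [sum_range, hbij.sum_comp f]

end DigitReversal

section PadicSeries

variable {p : ℕ} [Fact p.Prime]

lemma summable_mul_natCast_pow (a : ℕ → ℤ_[p]) : Summable fun r => a r * (p : ℤ_[p]) ^ r := by
  have hp : ‖(p : ℤ_[p])‖ < 1 := PadicInt.norm_lt_one_iff_dvd _ |>.2 dvd_rfl
  refine .of_norm_bounded (summable_geometric_of_lt_one (norm_nonneg _) hp) fun r => ?_
  rw [norm_mul, norm_pow]
  exact mul_le_of_le_one_left (by positivity) (PadicInt.norm_le_one _)

lemma toZModPow_tsum_mul_natCast_pow (a : ℕ → ℤ_[p]) (n : ℕ) :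
    PadicInt.toZModPow n (∑' r, a r * (p : ℤ_[p]) ^ r)
      = ∑ r ∈ range n, PadicInt.toZModPow n (a r) * (p : ZMod (p ^ n)) ^ r := by
  have htail : ∑' r, a (r + n) * (p : ℤ_[p]) ^ (r + n)
      = (∑' r, a (r + n) * (p : ℤ_[p]) ^ r) * (p : ℤ_[p]) ^ n := by
    simp only [pow_add, ← mul_assoc]
    exact (summable_mul_natCast_pow _).tsum_mul_right _
  have hpn : (p : ZMod (p ^ n)) ^ n = 0 := by rw [← Nat.cast_pow, ZMod.natCast_self]
  rw [← (summable_mul_natCast_pow a).sum_add_tsum_nat_add n, htail]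
  simp only [map_add, map_sum, map_mul, map_pow, map_natCast, hpn, mul_zero, add_zero]

lemma toZModPow_eq_natCast_appr (n : ℕ) (z : ℤ_[p]) :
    PadicInt.toZModPow n z = (z.appr n : ZMod (p ^ n)) := rfl

lemma natCast_appr_of_le {m n : ℕ} (h : m ≤ n) (z : ℤ_[p]) :
    (z.appr n : ZMod (p ^ m)) = z.appr m :=
  ((ZMod.natCast_eq_natCast_iff _ _ _).2
    ((Nat.modEq_iff_dvd' (z.appr_mono h)).2 (z.dvd_appr_sub_appr m n h))).symm

end PadicSeries

section PadicFunctions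

lemma padDigit_eq_floor_div_mod {p : ℕ} (hp : p ≠ 0) {r n : ℕ} (hr : r < n) (x : ℝ) :
    padDigit p x r = ⌊x * (p ^ n : ℕ)⌋₊ / p ^ (n - 1 - r) % p := by
  obtain ⟨j, rfl⟩ := Nat.exists_eq_add_of_lt hr
  have hj : r + j + 1 - 1 - r = j := by omega
  have hpow : x * (p ^ (r + j + 1) : ℕ) / (p ^ j : ℕ) = x * (p : ℝ) ^ (r + 1) := by
    push_cast
    field_simp
    ring
  rw [padDigit, Int.floor_toNat, hj, ← Nat.floor_div_natCast, hpow]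

lemma radInv_eq_digitRev_div_pow {p k n : ℕ} (hp : 1 < p) (hk : Nat.log p k < n) :
    radInv p k = digitRev p n k / (p : ℝ) ^ n := by
  rw [digitRev_div_pow (by omega), radInv]
  refine sum_subset (range_mono hk) fun i _ hi => ?_
  have hki : k < p ^ i := Nat.lt_pow_of_log_lt hp (by simpa using hi)
  simp [Nat.div_eq_of_lt hki]

variable {p : ℕ} [Fact p.Prime]

lemma toZModPow_phiPlus (n : ℕ) (x : ℝ) :
    PadicInt.toZModPow n (phiPlus p x) = digitRev p n ⌊x * (p ^ n : ℕ)⌋₊ := by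
  rw [phiPlus, toZModPow_tsum_mul_natCast_pow, digitRev, Nat.cast_sum]
  refine sum_congr rfl fun r hr => ?_
  rw [padDigit_eq_floor_div_mod (NeZero.ne p) (mem_range.1 hr), map_natCast, Nat.cast_mul,
    Nat.cast_pow p r]

lemma exp_radInv_mul_natCast {k n : ℕ} (hk : Nat.log p k < n) (m : ℕ) :
    Complex.exp (2 * Real.pi * Complex.I * (radInv p k * (m : ℝ)))
      = ZMod.stdAddChar (digitRev p n k * m : ZMod (p ^ n)) := by
  have hψ := ZMod.stdAddChar_coe (N := p ^ n) (digitRev p n k * m : ℕ)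
  push_cast at hψ
  rw [hψ, radInv_eq_digitRev_div_pow (Fact.out : p.Prime).one_lt hk]
  congr 1
  push_cast
  ring

lemma padChar_eq_stdAddChar {k n : ℕ} (hk : Nat.log p k < n) (z : ℤ_[p]) :
    padChar p k z = ZMod.stdAddChar ((digitRev p n k : ZMod (p ^ n)) * PadicInt.toZModPow n z) := by
  rw [padChar, exp_radInv_mul_natCast (Nat.lt_succ_self _), ← natCast_appr_of_le hk z,
    ← exp_radInv_mul_natCast (Nat.lt_succ_self _), exp_radInv_mul_natCast hk,
    toZModPow_eq_natCast_appr]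

lemma padBeta_eq_stdAddChar {k n : ℕ} (hk : Nat.log p k < n) (x : ℝ) :
    padBeta p k x
      = ZMod.stdAddChar (digitRev p n k * digitRev p n ⌊x * (p ^ n : ℕ)⌋₊ : ZMod (p ^ n)) := by
  rw [padBeta, padChar_eq_stdAddChar hk, toZModPow_phiPlus]

lemma padBeta_mul_conj_padBeta {k l n : ℕ} (hk : Nat.log p k < n) (hl : Nat.log p l < n) (x : ℝ) :
    padBeta p k x * conj (padBeta p l x)
      = ZMod.stdAddChar
          (digitRev p n ⌊x * (p ^ n : ℕ)⌋₊ * (digitRev p n k - digitRev p n l) : ZMod (p ^ n)) := by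
  rw [padBeta_eq_stdAddChar hk, padBeta_eq_stdAddChar hl, ← AddChar.map_neg_eq_conj,
    ← AddChar.map_add_eq_mul]
  congr 1
  ring

end PadicFunctions

theorem padBeta_orthonormal (p : ℕ) [hp : Fact p.Prime] (k l : ℕ) :
    ∫ x in Set.Ico (0:ℝ) 1, padBeta p k x * (starRingEnd ℂ) (padBeta p l x)
      = if k = l then 1 else 0 := by
  obtain ⟨n, hn⟩ := exists_gt (max (Nat.log p k) (Nat.log p l))
  obtain ⟨hk, hl⟩ := max_lt_iff.1 hn
  have hk' : k < p ^ n := Nat.lt_pow_of_log_lt hp.out.one_lt hk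
  have hl' : l < p ^ n := Nat.lt_pow_of_log_lt hp.out.one_lt hl
  let ψ : AddChar (ZMod (p ^ n)) ℂ := ZMod.stdAddChar
  let c : ZMod (p ^ n) := digitRev p n k - digitRev p n l
  calc ∫ x in Set.Ico (0 : ℝ) 1, padBeta p k x * conj (padBeta p l x)
      = ∫ x in Set.Ico (0 : ℝ) 1, ψ (digitRev p n ⌊x * (p ^ n : ℕ)⌋₊ * c) := by
        simp only [padBeta_mul_conj_padBeta hk hl, ψ, c]
    _ = ((p ^ n : ℕ) : ℝ)⁻¹ • ∑ m ∈ range (p ^ n), ψ (digitRev p n m * c) :=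
        setIntegral_Ico_comp_natFloor_mul (fun m => ψ (digitRev p n m * c)) (p ^ n)
    _ = ((p ^ n : ℕ) : ℝ)⁻¹ • ∑ z, ψ (z * c) := by
        rw [sum_range_natCast_digitRev n fun z => ψ (z * c)]
    _ = ((p ^ n : ℕ) : ℝ)⁻¹ • if c = 0 then ((p ^ n : ℕ) : ℂ) else 0 := by
        rw [AddChar.sum_mulShift c (ZMod.isPrimitive_stdAddChar _), ZMod.card, Nat.cast_ite,
          Nat.cast_zero]
    _ = if k = l then 1 else 0 := by
        simp only [c, sub_eq_zero, natCast_digitRev_inj hk' hl', smul_ite, smul_zero]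
        congr 1
        rw [Complex.real_smul]
        push_cast
        exact inv_mul_cancel₀ (pow_ne_zero n (NeZero.ne (p : ℂ)))
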